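/- Let k ≥ 1, d ∈ (1/2 − 1/(2k), 1/2), β ≠ 0 with −k(d−1) − k/2 − 1 < β < −k(d−1) − k/2, and for λ > 0, t > 0 set h_t^{λ,β}(x) = ∫_ℝ l_t^β(s) ∏_{i=1}^k (s−x_i)_+^{d−1} e^{−λ(s−x_i)_+} ds where l_t^β(s) = ((t−s)_+^β − (−s)_+^β)/β. Then ∫_{ℝ^k} h_t^{λ,β}(x)² dx = t^{2β + 2 + k(2d−1)} · Φ(λ t), where Φ(μ) = ∫_ℝ ∫_ℝ l_1^β(u) l_1^β(v) · e^{−μ k |u−v|} · |u−v|^{k(2d−1)} · ( ∫_0^∞ y^{d−1} (1+y)^{d−1} e^{−2μ|u−v| y} dy )^k du dv. -/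

import Mathlib

open MeasureTheory Real Set

/-- The fractional filter `l_t^β(s) = ((t−s)₊^β − (−s)₊^β)/β`. -/
noncomputable def ell (t b s : ℝ) : ℝ :=
  ((max (t - s) 0) ^ b - (max (-s) 0) ^ b) / b

/-- The fractionally filtered tempered Hermite kernel
`h_t^{λ,β}(x) = ∫_ℝ l_t^β(s) ∏ᵢ (s−xᵢ)₊^{d−1} e^{−λ(s−xᵢ)₊} ds`. -/
noncomputable def tHermiteFiltKernel (k : ℕ) (d lam b t : ℝ) (x : Fin k → ℝ) : ℝ :=
  ∫ s : ℝ, ell t b s *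
    ∏ i, ((max (s - x i) 0) ^ (d - 1) * Real.exp (-lam * max (s - x i) 0))

/-- `Φ(μ)` from the variance scaling identity. -/
noncomputable def Phi (k : ℕ) (d b μ : ℝ) : ℝ :=
  ∫ u : ℝ, ∫ v : ℝ,
    ell 1 b u * ell 1 b v * Real.exp (-μ * (k : ℝ) * |u - v|) *
      |u - v| ^ ((k : ℝ) * (2 * d - 1)) *
      (∫ y in Set.Ioi (0 : ℝ),
        y ^ (d - 1) * (1 + y) ^ (d - 1) * Real.exp (-2 * μ * |u - v| * y)) ^ k

open scoped ENNReal

noncomputable def gker (d lam z : ℝ) : ℝ := (max z 0) ^ (d - 1) * Real.exp (-lam * max z 0)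

noncomputable def Jint (d m w : ℝ) : ℝ :=
  ∫ y in Set.Ioi (0 : ℝ), y ^ (d - 1) * (1 + y) ^ (d - 1) * Real.exp (-2 * m * |w| * y)

noncomputable def cker (d lam w : ℝ) : ℝ :=
  |w| ^ (2 * d - 1) * Real.exp (-lam * |w|) * Jint d lam w

lemma gker_nonneg (d lam z : ℝ) : 0 ≤ gker d lam z := by
  unfold gker; positivity

lemma gker_measurable (d lam : ℝ) : Measurable (gker d lam) := by
  unfold gker; fun_prop

lemma ell_measurable (t b : ℝ) : Measurable (ell t b) := by
  unfold ell; fun_prop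

lemma J_base (d : ℝ) (hd0 : 0 < d) (hd2 : d < 1/2) :
    IntegrableOn (fun y : ℝ => y ^ (d - 1) * (1 + y) ^ (d - 1)) (Ioi 0) := by
  have h : Ioi (0:ℝ) = Ioc 0 1 ∪ Ioi 1 := by rw [Ioc_union_Ioi_eq_Ioi]; norm_num
  rw [h]
  apply IntegrableOn.union
  · have h1 : IntegrableOn (fun y : ℝ => y ^ (d-1)) (Ioc 0 1) := by
      have := (intervalIntegral.intervalIntegrable_rpow' (a := 0) (b := 1) (r := d-1) (by linarith))
      rwa [intervalIntegrable_iff_integrableOn_Ioc_of_le (by norm_num)] at this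
    refine Integrable.mono' h1 (by apply Measurable.aestronglyMeasurable; fun_prop) ?_
    filter_upwards [ae_restrict_mem measurableSet_Ioc] with y hy
    have hy0 : 0 < y := hy.1
    rw [Real.norm_of_nonneg (by positivity)]
    have : (1 + y) ^ (d-1) ≤ 1 := Real.rpow_le_one_of_one_le_of_nonpos (by linarith) (by linarith)
    exact mul_le_of_le_one_right (by positivity) this
  · have h1 : IntegrableOn (fun y : ℝ => y ^ (2*d-2)) (Ioi 1) :=
      integrableOn_Ioi_rpow_of_lt (by linarith) (by norm_num)
    refine Integrable.mono' h1 (by apply Measurable.aestronglyMeasurable; fun_prop) ?_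
    filter_upwards [ae_restrict_mem measurableSet_Ioi] with y hy
    have hy0 : 0 < y := by have : (1:ℝ) < y := hy; linarith
    rw [Real.norm_of_nonneg (by positivity)]
    have : (1 + y) ^ (d-1) ≤ y ^ (d-1) := Real.rpow_le_rpow_of_nonpos hy0 (by linarith) (by linarith)
    calc _ ≤ y ^ (d-1) * y ^ (d-1) := by gcongr
      _ = _ := by rw [← Real.rpow_add hy0]; ring_nf

lemma J_le (d : ℝ) {m : ℝ} (hm : 0 ≤ m) (w : ℝ) {y : ℝ} (hy : 0 < y) :
    y ^ (d - 1) * (1 + y) ^ (d - 1) * Real.exp (-2 * m * |w| * y)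
      ≤ y ^ (d - 1) * (1 + y) ^ (d - 1) := by
  apply mul_le_of_le_one_right (by positivity)
  rw [Real.exp_le_one_iff]
  have : 0 ≤ 2 * m * |w| * y := by positivity
  linarith

lemma J_integrable (d : ℝ) (hd0 : 0 < d) (hd2 : d < 1/2) {m : ℝ} (hm : 0 ≤ m) (w : ℝ) :
    IntegrableOn (fun y : ℝ => y ^ (d - 1) * (1 + y) ^ (d - 1) * Real.exp (-2 * m * |w| * y))
      (Ioi 0) := by
  refine Integrable.mono' (J_base d hd0 hd2)
    (by apply Measurable.aestronglyMeasurable; fun_prop) ?_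
  filter_upwards [ae_restrict_mem measurableSet_Ioi] with y hy
  have hy0 : 0 < y := hy
  rw [Real.norm_of_nonneg (by positivity)]
  exact J_le d hm w hy0

lemma Jint_nonneg (d m w : ℝ) : 0 ≤ Jint d m w := by
  apply setIntegral_nonneg measurableSet_Ioi
  intro y hy
  have : (0:ℝ) < y := hy
  positivity

lemma Jint_bound (d : ℝ) (hd0 : 0 < d) (hd2 : d < 1/2) {m : ℝ} (hm : 0 ≤ m) (w : ℝ) :
    Jint d m w ≤ ∫ y in Ioi (0:ℝ), y ^ (d - 1) * (1 + y) ^ (d - 1) := by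
  apply setIntegral_mono_on (J_integrable d hd0 hd2 hm w) (J_base d hd0 hd2) measurableSet_Ioi
  intro y hy
  exact J_le d hm w hy

lemma cker_nonneg (d lam w : ℝ) : 0 ≤ cker d lam w := by
  have := Jint_nonneg d lam w
  unfold cker; positivity

lemma gker_conv_lt (d : ℝ) (hd0 : 0 < d) (hd2 : d < 1/2) {lam : ℝ} (hl : 0 ≤ lam) {s r : ℝ}
    (h : r < s) :
    Integrable (fun x => gker d lam (s - x) * gker d lam (r - x)) ∧
      ∫ x, gker d lam (s - x) * gker d lam (r - x) = cker d lam (s - r) := by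
  have ha : 0 < s - r := by linarith
  set F : ℝ → ℝ := fun z => gker d lam (s - r + z) * gker d lam z with hF
  have hFx : (fun x => gker d lam (s - x) * gker d lam (r - x)) = fun x => F (r - x) := by
    funext x; simp only [hF]; congr 2; ring
  have hscale : (fun y => F ((s - r) * y)) = (Ioi (0:ℝ)).indicator (fun y =>
      ((s - r) ^ (2 * d - 2) * Real.exp (-lam * (s - r))) *
      (y ^ (d - 1) * (1 + y) ^ (d - 1) * Real.exp (-2 * lam * |s - r| * y))) := by
    funext y
    by_cases hy : 0 < y
    · rw [indicator_of_mem (show y ∈ Ioi 0 from hy)]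
      simp only [hF, gker]
      have e1 : s - r + (s - r) * y = (s - r) * (1 + y) := by ring
      rw [e1, max_eq_left (by positivity), max_eq_left (by positivity), abs_of_pos ha,
        Real.mul_rpow ha.le (by positivity), Real.mul_rpow ha.le hy.le]
      have e2 : (s - r) ^ (2 * d - 2) = (s - r) ^ (d-1) * (s-r)^(d-1) := by
        rw [← Real.rpow_add ha]; ring_nf
      have e3 : Real.exp (-lam * (s-r)) * Real.exp (-2 * lam * (s-r) * y) =
          Real.exp (-lam * ((s-r) * (1+y))) * Real.exp (-lam * ((s-r)*y)) := by
        rw [← Real.exp_add, ← Real.exp_add]; ring_nf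
      rw [e2]
      linear_combination (-(s - r) ^ (d-1) * (s-r)^(d-1) * y ^ (d-1) * (1+y)^(d-1)) * e3
    · rw [indicator_of_notMem (show y ∉ Ioi 0 from hy)]
      simp only [hF, gker]
      have : (s - r) * y ≤ 0 := mul_nonpos_of_nonneg_of_nonpos ha.le (not_lt.mp hy)
      rw [max_eq_right this, Real.zero_rpow (by linarith)]
      simp
  rw [hFx]
  constructor
  · refine Integrable.comp_sub_left ?_ r
    rw [← integrable_comp_mul_left_iff F ha.ne', hscale, integrable_indicator_iff measurableSet_Ioi]
    exact (J_integrable d hd0 hd2 hl (s-r)).const_mul _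
  · rw [integral_sub_left_eq_self F volume r]
    have := Measure.integral_comp_mul_left F (s - r)
    rw [hscale, integral_indicator measurableSet_Ioi, integral_const_mul] at this
    have e4 : ∫ z, F z = (s - r) * ((s - r) ^ (2 * d - 2) * Real.exp (-lam * (s - r)) *
        Jint d lam (s - r)) := by
      unfold Jint
      rw [this, abs_of_pos (inv_pos.mpr ha), smul_eq_mul, mul_inv_cancel_left₀ ha.ne']
    rw [e4, cker, abs_of_pos ha]
    have e5 : (s - r) ^ (2 * d - 1) = (s - r) * (s - r) ^ (2 * d - 2) := by
      rw [← Real.rpow_one_add' ha.le (by linarith)]; ring_nf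
    rw [e5]; ring

lemma gker_conv (d : ℝ) (hd0 : 0 < d) (hd2 : d < 1/2) {lam : ℝ} (hl : 0 ≤ lam) {s r : ℝ}
    (h : r ≠ s) :
    Integrable (fun x => gker d lam (s - x) * gker d lam (r - x)) ∧
      ∫ x, gker d lam (s - x) * gker d lam (r - x) = cker d lam (s - r) := by
  rcases lt_or_gt_of_ne h with h | h
  · exact gker_conv_lt d hd0 hd2 hl h
  · have := gker_conv_lt d hd0 hd2 hl h
    have e : cker d lam (s - r) = cker d lam (r - s) := by
      unfold cker Jint; rw [abs_sub_comm]
    rw [e]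
    simpa only [mul_comm] using this

lemma lintegral_scale (f : ℝ → ℝ≥0∞) (hf : Measurable f) {a : ℝ} (ha : 0 < a) :
    ∫⁻ v, f v = ENNReal.ofReal a * ∫⁻ w, f (a * w) := by
  conv_lhs => rw [← Real.smul_map_volume_mul_left ha.ne']
  rw [lintegral_smul_measure, lintegral_map hf (by fun_prop), abs_of_pos ha, smul_eq_mul]

lemma beta_fin (b c : ℝ) (hb : -1 < b) (hc : -1 < c) :
    ∫⁻ w in Ioc (0:ℝ) 1, ENNReal.ofReal (w ^ b * |1 - w| ^ c) < ∞ := by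
  have h : IntegrableOn (fun w : ℝ => w ^ b * |1 - w| ^ c) (Ioc 0 1) := by
    have hu : Ioc (0:ℝ) 1 = Ioc 0 (1/2) ∪ Ioc (1/2) 1 := by
      rw [Ioc_union_Ioc_eq_Ioc] <;> norm_num
    have cont : ∀ (p q e : ℝ), 0 < p → ContinuousOn (fun w : ℝ => w ^ e) (Icc p q) := by
      intro p q e hp w hw
      exact (Real.continuousAt_rpow_const _ _
        (Or.inl (by have := hw.1; linarith))).continuousWithinAt
    rw [hu]
    apply IntegrableOn.union
    · have h1 : IntegrableOn (fun w : ℝ => w ^ b) (Icc 0 (1/2)) := by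
        have := (intervalIntegral.intervalIntegrable_rpow' (a := 0) (b := 1/2) hb)
        rwa [intervalIntegrable_iff_integrableOn_Icc_of_le (by norm_num)] at this
      refine (h1.mul_continuousOn ?_ isCompact_Icc).mono_set Ioc_subset_Icc_self
      intro w hw
      refine ContinuousAt.continuousWithinAt ?_
      refine ContinuousAt.rpow_const (by fun_prop) (Or.inl ?_)
      have := hw.2
      rw [abs_ne_zero]; linarith
    · have h1 : IntegrableOn (fun w : ℝ => |1 - w| ^ c) (Icc (1/2) 1) := by
        have := (intervalIntegral.intervalIntegrable_rpow' (a := 0) (b := 1/2) hc)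
        have := this.comp_sub_left 1
        have := this.symm
        norm_num at this
        rw [intervalIntegrable_iff_integrableOn_Icc_of_le (by norm_num)] at this
        refine this.congr_fun ?_ measurableSet_Icc
        intro w hw
        simp only
        rw [abs_of_nonneg]
        have := hw.2; linarith
      exact (h1.continuousOn_mul (cont _ _ b (by norm_num)) isCompact_Icc).mono_set
        Ioc_subset_Icc_self
  have := h.2
  rw [hasFiniteIntegral_iff_ofReal] at this
  · exact this
  · filter_upwards [ae_restrict_mem measurableSet_Ioc] with w hw
    have := hw.1
    simp only [Pi.zero_apply]
    positivity

noncomputable def phi (A b u : ℝ) : ℝ≥0∞ := (Ioo 0 A).indicator (fun u => ENNReal.ofReal (u ^ b)) u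

lemma phi_measurable (A b : ℝ) : Measurable (phi A b) := by
  unfold phi
  exact Measurable.indicator (by fun_prop) measurableSet_Ioo

lemma near_base (A b c : ℝ) (hA : 0 < A) (hb : -1 < b) (hc : -1 < c) (hbc : -2 < 2 * b + c) :
    ∫⁻ u, ∫⁻ v, phi A b u * phi A b v * ENNReal.ofReal (|u - v| ^ c) < ∞ := by
  set psi : ℝ → ℝ → ℝ≥0∞ := fun u v =>
    {p : ℝ × ℝ | 0 < p.2 ∧ p.2 ≤ p.1}.indicator
      (fun p => ENNReal.ofReal (p.2 ^ b * |p.1 - p.2| ^ c)) (u, v) with hpsi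
  have hset : MeasurableSet {p : ℝ × ℝ | 0 < p.2 ∧ p.2 ≤ p.1} :=
    (measurableSet_lt measurable_const measurable_snd).inter
      (measurableSet_le measurable_snd measurable_fst)
  have hpm : Measurable (Function.uncurry psi) := by
    have : Function.uncurry psi = {p : ℝ × ℝ | 0 < p.2 ∧ p.2 ≤ p.1}.indicator
      (fun p => ENNReal.ofReal (p.2 ^ b * |p.1 - p.2| ^ c)) := by
      funext p; rfl
    rw [this]
    exact Measurable.indicator (by fun_prop) hset
  have hphi := phi_measurable A b
  have hTm : Measurable (fun p : ℝ × ℝ => phi A b p.1 * psi p.1 p.2) :=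
    (hphi.comp measurable_fst).mul hpm
  have hT : ∫⁻ u, ∫⁻ v, phi A b u * psi u v < ∞ := by
    have e : ∀ u, ∫⁻ v, phi A b u * psi u v = (Ioo 0 A).indicator
        (fun u => ENNReal.ofReal (u ^ (2*b+c+1))) u *
        ∫⁻ w in Ioc (0:ℝ) 1, ENNReal.ofReal (w ^ b * |1 - w| ^ c) := by
      intro u
      have hm : Measurable (psi u) := hpm.comp (measurable_const.prodMk measurable_id)
      rw [lintegral_const_mul _ hm]
      unfold phi
      by_cases hu : u ∈ Ioo 0 A
      · rw [indicator_of_mem hu, indicator_of_mem hu]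
        have hu0 : 0 < u := hu.1
        rw [lintegral_scale _ hm hu0]
        have e2 : ∀ w, psi u (u * w) = ENNReal.ofReal (u ^ (b + c)) *
            (Ioc (0:ℝ) 1).indicator (fun w => ENNReal.ofReal (w ^ b * |1 - w| ^ c)) w := by
          intro w
          by_cases hw : w ∈ Ioc (0:ℝ) 1
          · have hw0 := hw.1
            have hmem : (u, u * w) ∈ {p : ℝ × ℝ | 0 < p.2 ∧ p.2 ≤ p.1} :=
              ⟨by positivity, mul_le_of_le_one_right hu0.le hw.2⟩
            simp only [hpsi]
            rw [indicator_of_mem hmem, indicator_of_mem hw, ← ENNReal.ofReal_mul (by positivity)]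
            congr 1
            have : u - u * w = u * (1 - w) := by ring
            simp only
            rw [this, abs_mul, abs_of_pos hu0, Real.mul_rpow hu0.le hw0.le,
              Real.mul_rpow hu0.le (abs_nonneg _), Real.rpow_add hu0]
            ring
          · have hmem : (u, u * w) ∉ {p : ℝ × ℝ | 0 < p.2 ∧ p.2 ≤ p.1} := by
              rintro ⟨h1, h2⟩
              apply hw
              simp only at h1 h2
              exact ⟨pos_of_mul_pos_right h1 hu0.le, by
                by_contra hcon
                push Not at hcon
                nlinarith⟩
            simp only [hpsi]
            rw [indicator_of_notMem hmem, indicator_of_notMem hw, mul_zero]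
        simp_rw [e2]
        rw [lintegral_const_mul _ (Measurable.indicator (by fun_prop) measurableSet_Ioc),
          lintegral_indicator measurableSet_Ioc, ← mul_assoc, ← mul_assoc,
          ← ENNReal.ofReal_mul (by positivity), ← ENNReal.ofReal_mul (by positivity)]
        congr 2
        rw [← Real.rpow_add_one hu0.ne', ← Real.rpow_add hu0]
        ring_nf
      · rw [indicator_of_notMem hu, indicator_of_notMem hu]; simp
    simp_rw [e]
    rw [lintegral_mul_const _ (Measurable.indicator (by fun_prop) measurableSet_Ioo),
      lintegral_indicator measurableSet_Ioo]
    refine ENNReal.mul_lt_top ?_ (beta_fin b c hb hc)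
    have h1 : IntegrableOn (fun u : ℝ => u ^ (2*b+c+1)) (Ioo 0 A) := by
      have := (intervalIntegral.intervalIntegrable_rpow' (a := 0) (b := A) (r := 2*b+c+1)
        (by linarith))
      rwa [intervalIntegrable_iff_integrableOn_Ioo_of_le hA.le] at this
    have := h1.2
    rw [hasFiniteIntegral_iff_ofReal] at this
    · exact this
    · filter_upwards [ae_restrict_mem measurableSet_Ioo] with w hw
      have := hw.1
      simp only [Pi.zero_apply]
      positivity
  have hbound : ∀ u v, phi A b u * phi A b v * ENNReal.ofReal (|u - v| ^ c) ≤
      phi A b u * psi u v + phi A b v * psi v u := by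
    have key : ∀ u v, v ≤ u → phi A b u * phi A b v * ENNReal.ofReal (|u - v| ^ c) ≤
        phi A b u * psi u v := by
      intro u v huv
      rw [mul_assoc]
      gcongr
      unfold phi
      by_cases hv : v ∈ Ioo 0 A
      · have hmem : (u, v) ∈ {p : ℝ × ℝ | 0 < p.2 ∧ p.2 ≤ p.1} := ⟨hv.1, huv⟩
        have := hv.1
        rw [indicator_of_mem hv, ← ENNReal.ofReal_mul (by positivity)]
        simp only [hpsi]
        rw [indicator_of_mem hmem]
      · rw [indicator_of_notMem hv]; simp
    intro u v
    rcases le_total v u with h | h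
    · exact (key u v h).trans le_self_add
    · have := key v u h
      rw [abs_sub_comm, mul_comm (phi A b v)] at this
      exact this.trans le_add_self
  calc _ ≤ ∫⁻ u, ∫⁻ v, (phi A b u * psi u v + phi A b v * psi v u) :=
        lintegral_mono fun u => lintegral_mono fun v => hbound u v
    _ = ∫⁻ u, ((∫⁻ v, phi A b u * psi u v) + ∫⁻ v, phi A b v * psi v u) := by
        refine lintegral_congr fun u => ?_
        exact lintegral_add_left (hTm.comp (measurable_const.prodMk measurable_id)) _
    _ = (∫⁻ u, ∫⁻ v, phi A b u * psi u v) + ∫⁻ u, ∫⁻ v, phi A b v * psi v u :=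
        lintegral_add_left hTm.lintegral_prod_right' _
    _ = (∫⁻ u, ∫⁻ v, phi A b u * psi u v) + ∫⁻ u, ∫⁻ v, phi A b u * psi u v := by
        congr 1
        exact lintegral_lintegral_swap (f := fun u v => phi A b v * psi v u)
          (hTm.comp measurable_swap).aemeasurable
    _ < ∞ := ENNReal.add_lt_top.mpr ⟨hT, hT⟩

lemma near_shift (a A b c : ℝ) (hA : 0 < A) (hb : -1 < b) (hc : -1 < c) (hbc : -2 < 2 * b + c) :
    ∫⁻ s, ∫⁻ r, phi A b (a - s) * phi A b (a - r) * ENNReal.ofReal (|s - r| ^ c) < ∞ := by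
  have h := near_base A b c hA hb hc hbc
  rw [← lintegral_sub_left_eq_self _ a] at h
  refine lt_of_le_of_lt (le_of_eq ?_) h
  refine lintegral_congr fun s => ?_
  refine Eq.trans ?_ (lintegral_sub_left_eq_self
    (fun v => phi A b (a - s) * phi A b v * ENNReal.ofReal (|a - s - v| ^ c)) a)
  refine lintegral_congr fun r => ?_
  congr 3
  rw [abs_sub_comm]; congr 1; ring

lemma far_fin (f K : ℝ → ℝ≥0∞) (hf : Measurable f) (hK : Measurable K)
    (hsym : ∀ w, K (-w) = K w) (hf2 : ∫⁻ s, f s ^ 2 < ∞) (hK1 : ∫⁻ w, K w < ∞) :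
    ∫⁻ s, ∫⁻ r, f s * f r * K (s - r) < ∞ := by
  have hT : ∫⁻ s, ∫⁻ r, f s ^ 2 * K (s - r) < ∞ := by
    have e : ∀ s, ∫⁻ r, f s ^ 2 * K (s - r) = f s ^ 2 * ∫⁻ w, K w := by
      intro s
      rw [lintegral_const_mul _ (by fun_prop), lintegral_sub_left_eq_self]
    simp_rw [e]
    rw [lintegral_mul_const _ (by fun_prop)]
    exact ENNReal.mul_lt_top hf2 hK1
  have hTm : Measurable (fun p : ℝ × ℝ => f p.1 ^ 2 * K (p.1 - p.2)) := by fun_prop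
  have hab : ∀ a b : ℝ≥0∞, a * b ≤ a ^ 2 + b ^ 2 := by
    intro a b
    rcases le_total a b with h | h
    · calc a * b ≤ b * b := by gcongr
        _ = b ^ 2 := (sq b).symm
        _ ≤ _ := le_add_self
    · calc a * b ≤ a * a := by gcongr
        _ = a ^ 2 := (sq a).symm
        _ ≤ _ := le_self_add
  calc _ ≤ ∫⁻ s, ∫⁻ r, (f s ^ 2 * K (s - r) + f r ^ 2 * K (r - s)) := by
        refine lintegral_mono fun u => lintegral_mono fun v => ?_
        simp only
        rw [← hsym (v - u), neg_sub, ← add_mul]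
        gcongr
        exact hab _ _
    _ = ∫⁻ u, ((∫⁻ v, f u ^ 2 * K (u - v)) + ∫⁻ v, f v ^ 2 * K (v - u)) := by
        refine lintegral_congr fun u => ?_
        exact lintegral_add_left (hTm.comp (measurable_const.prodMk measurable_id)) _
    _ = (∫⁻ u, ∫⁻ v, f u ^ 2 * K (u - v)) + ∫⁻ u, ∫⁻ v, f v ^ 2 * K (v - u) :=
        lintegral_add_left hTm.lintegral_prod_right' _
    _ = (∫⁻ u, ∫⁻ v, f u ^ 2 * K (u - v)) + ∫⁻ u, ∫⁻ v, f u ^ 2 * K (u - v) := by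
        congr 1
        exact lintegral_lintegral_swap (f := fun u v => f v ^ 2 * K (v - u))
          (hTm.comp measurable_swap).aemeasurable
    _ < ∞ := ENNReal.add_lt_top.mpr ⟨hT, hT⟩

noncomputable def Pk (k : ℕ) (d lam s : ℝ) (x : Fin k → ℝ) : ℝ := ∏ i, gker d lam (s - x i)

lemma Pk_nonneg (k : ℕ) (d lam s : ℝ) (x : Fin k → ℝ) : 0 ≤ Pk k d lam s x :=
  Finset.prod_nonneg fun i _ => gker_nonneg _ _ _

lemma Pk_measurable (k : ℕ) (d lam : ℝ) :
    Measurable (fun p : ℝ × (Fin k → ℝ) => Pk k d lam p.1 p.2) := by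
  unfold Pk
  refine Finset.measurable_prod _ fun i _ => ?_
  exact (gker_measurable d lam).comp (by fun_prop)

lemma Pk_measurable_x (k : ℕ) (d lam s : ℝ) :
    Measurable (fun x : Fin k → ℝ => Pk k d lam s x) := by
  unfold Pk
  refine Finset.measurable_prod _ fun i _ => ?_
  exact (gker_measurable d lam).comp (by fun_prop)

lemma Pk_conv (k : ℕ) (d : ℝ) (hd0 : 0 < d) (hd2 : d < 1/2) {lam : ℝ} (hl : 0 ≤ lam) {s r : ℝ}
    (h : r ≠ s) :
    Integrable (fun x => Pk k d lam s x * Pk k d lam r x) ∧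
      ∫ x, Pk k d lam s x * Pk k d lam r x = cker d lam (s - r) ^ k := by
  obtain ⟨h1, h2⟩ := gker_conv d hd0 hd2 hl h
  have e : (fun x : Fin k → ℝ => Pk k d lam s x * Pk k d lam r x) =
      fun x => ∏ i, (gker d lam (s - x i) * gker d lam (r - x i)) := by
    funext x; unfold Pk; rw [Finset.prod_mul_distrib]
  rw [e]
  constructor
  · exact Integrable.fintype_prod (f := fun _ z => gker d lam (s - z) * gker d lam (r - z))
      fun _ => h1
  · rw [integral_fintype_prod_volume_eq_pow (fun z => gker d lam (s - z) * gker d lam (r - z)), h2,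
      Fintype.card_fin]

noncomputable def Gf (k : ℕ) (d lam : ℝ) (f : ℝ → ℝ≥0∞) : ℝ≥0∞ :=
  ∫⁻ x : Fin k → ℝ, (∫⁻ s, f s * ENNReal.ofReal (Pk k d lam s x)) ^ 2

lemma Pke_measurable (k : ℕ) (d lam : ℝ) (f : ℝ → ℝ≥0∞) (hf : Measurable f) :
    Measurable (fun p : ℝ × (Fin k → ℝ) => f p.1 * ENNReal.ofReal (Pk k d lam p.1 p.2)) :=
  (hf.comp measurable_fst).mul (Pk_measurable k d lam).ennreal_ofReal

lemma Gf_eq (k : ℕ) (d : ℝ) (hd0 : 0 < d) (hd2 : d < 1/2) {lam : ℝ} (hl : 0 ≤ lam)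
    (f : ℝ → ℝ≥0∞) (hf : Measurable f) :
    Gf k d lam f = ∫⁻ s, ∫⁻ r, f s * f r * ENNReal.ofReal (cker d lam (s - r) ^ k) := by
  unfold Gf
  have hm := Pke_measurable k d lam f hf
  have hmx : ∀ x : Fin k → ℝ, Measurable fun s => f s * ENNReal.ofReal (Pk k d lam s x) :=
    fun x => hm.comp (measurable_id.prodMk measurable_const)
  have hms : ∀ s : ℝ, Measurable fun x : Fin k → ℝ => f s * ENNReal.ofReal (Pk k d lam s x) :=
    fun s => hm.comp (measurable_const.prodMk measurable_id)
  have e1 : ∀ x : Fin k → ℝ, (∫⁻ s, f s * ENNReal.ofReal (Pk k d lam s x)) ^ 2 =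
      ∫⁻ s, ∫⁻ r, (f s * ENNReal.ofReal (Pk k d lam s x)) *
        (f r * ENNReal.ofReal (Pk k d lam r x)) := by
    intro x
    rw [sq, ← lintegral_lintegral_mul (hmx x).aemeasurable (hmx x).aemeasurable]
  simp_rw [e1]
  have hm3 : Measurable (fun q : ((Fin k → ℝ) × ℝ) × ℝ =>
      (f q.1.2 * ENNReal.ofReal (Pk k d lam q.1.2 q.1.1)) *
        (f q.2 * ENNReal.ofReal (Pk k d lam q.2 q.1.1))) := by
    refine Measurable.mul ?_ ?_
    · exact hm.comp (show Measurable fun q : ((Fin k → ℝ) × ℝ) × ℝ => (q.1.2, q.1.1) by fun_prop)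
    · exact hm.comp (show Measurable fun q : ((Fin k → ℝ) × ℝ) × ℝ => (q.2, q.1.1) by fun_prop)
  rw [lintegral_lintegral_swap (hm3.lintegral_prod_right').aemeasurable]
  refine lintegral_congr fun s => ?_
  rw [lintegral_lintegral_swap (by
    refine Measurable.aemeasurable ?_
    exact hm3.comp (show Measurable fun q : (Fin k → ℝ) × ℝ => ((q.1, s), q.2) by fun_prop))]
  refine lintegral_congr_ae ?_
  filter_upwards [(volume : Measure ℝ).ae_ne s] with r hr
  obtain ⟨h1, h2⟩ := Pk_conv k d hd0 hd2 hl hr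
  have e2 : ∀ x : Fin k → ℝ, (f s * ENNReal.ofReal (Pk k d lam s x)) *
        (f r * ENNReal.ofReal (Pk k d lam r x)) =
      f s * f r * ENNReal.ofReal (Pk k d lam s x * Pk k d lam r x) := by
    intro x
    rw [ENNReal.ofReal_mul (Pk_nonneg _ _ _ _ _)]; ring
  simp_rw [e2]
  rw [lintegral_const_mul, ← h2, ofReal_integral_eq_lintegral_ofReal h1]
  · exact Filter.Eventually.of_forall fun x => mul_nonneg (Pk_nonneg _ _ _ _ _) (Pk_nonneg _ _ _ _ _)
  · exact ((Pk_measurable_x k d lam s).mul (Pk_measurable_x k d lam r)).ennreal_ofReal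

lemma Gf_mono (k : ℕ) (d lam : ℝ) {f g : ℝ → ℝ≥0∞} (h : ∀ s, f s ≤ g s) :
    Gf k d lam f ≤ Gf k d lam g := by
  unfold Gf
  gcongr
  exact h _

lemma Gf_add (k : ℕ) (d lam : ℝ) {f g : ℝ → ℝ≥0∞} (hf : Measurable f) (hg : Measurable g)
    (h1 : Gf k d lam f < ∞) (h2 : Gf k d lam g < ∞) :
    Gf k d lam (fun s => f s + g s) < ∞ := by
  have hmf := (Pke_measurable k d lam f hf)
  have hab : ∀ a b : ℝ≥0∞, (a + b) ^ 2 ≤ 4 * (a ^ 2 + b ^ 2) := by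
    intro a b
    rcases le_total a b with h | h
    · calc (a + b) ^ 2 ≤ (b + b) ^ 2 := by gcongr
        _ = 4 * b ^ 2 := by ring
        _ ≤ _ := by gcongr; exact le_add_self
    · calc (a + b) ^ 2 ≤ (a + a) ^ 2 := by gcongr
        _ = 4 * a ^ 2 := by ring
        _ ≤ _ := by gcongr; exact le_self_add
  calc Gf k d lam (fun s => f s + g s)
      = ∫⁻ x : Fin k → ℝ, ((∫⁻ s, f s * ENNReal.ofReal (Pk k d lam s x)) +
          ∫⁻ s, g s * ENNReal.ofReal (Pk k d lam s x)) ^ 2 := by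
        unfold Gf
        refine lintegral_congr fun x => ?_
        simp_rw [add_mul]
        have hx : Measurable (fun s => f s * ENNReal.ofReal (Pk k d lam s x)) :=
          hmf.comp (measurable_id.prodMk measurable_const)
        rw [lintegral_add_left hx]
    _ ≤ ∫⁻ x : Fin k → ℝ, 4 * ((∫⁻ s, f s * ENNReal.ofReal (Pk k d lam s x)) ^ 2 +
          (∫⁻ s, g s * ENNReal.ofReal (Pk k d lam s x)) ^ 2) :=
        lintegral_mono fun x => hab _ _
    _ = 4 * (Gf k d lam f + Gf k d lam g) := by
        rw [lintegral_const_mul' _ _ (by simp), lintegral_add_left]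
        · rfl
        · exact (hmf.lintegral_prod_left').pow_const 2
    _ < ∞ := ENNReal.mul_lt_top (by simp) (ENNReal.add_lt_top.mpr ⟨h1, h2⟩)

noncomputable def Kk (k : ℕ) (d lam w : ℝ) : ℝ :=
  |w| ^ ((k:ℝ) * (2 * d - 1)) * Real.exp (-lam * k * |w|)

lemma cker_pow (k : ℕ) (d lam w : ℝ) :
    cker d lam w ^ k = Kk k d lam w * Jint d lam w ^ k := by
  unfold cker Kk
  rw [mul_pow, mul_pow, ← Real.exp_nat_mul, ← Real.rpow_mul_natCast (abs_nonneg _)]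
  ring_nf

lemma Kk_nonneg (k : ℕ) (d lam w : ℝ) : 0 ≤ Kk k d lam w := by unfold Kk; positivity

lemma Kk_fin (k : ℕ) (hk : 1 ≤ k) (d lam : ℝ) (hlam : 0 < lam) (hc : -1 < (k:ℝ) * (2 * d - 1)) :
    ∫⁻ w, ENNReal.ofReal (Kk k d lam w) < ∞ := by
  have hk0 : (0:ℝ) < k := by exact_mod_cast hk
  have h0 := integrableOn_rpow_mul_exp_neg_mul_rpow hc one_pos (b := lam * k) (by positivity)
  have h1 : Integrable (fun w => Kk k d lam w) := by
    unfold Kk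
    have hp : IntegrableOn (fun w : ℝ => |w| ^ ((k:ℝ) * (2 * d - 1)) *
        Real.exp (-lam * k * |w|)) (Ioi 0) := by
      refine h0.congr_fun ?_ measurableSet_Ioi
      intro w hw
      have hw0 : (0:ℝ) < w := hw
      simp only
      rw [abs_of_pos hw0, Real.rpow_one]
      ring_nf
    have hn : IntegrableOn (fun w : ℝ => |w| ^ ((k:ℝ) * (2 * d - 1)) *
        Real.exp (-lam * k * |w|)) (Iic 0) := by
      rw [← Measure.map_neg_eq_self (volume : Measure ℝ)]
      let m : MeasurableEmbedding fun x : ℝ => -x := (Homeomorph.neg ℝ).measurableEmbedding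
      rw [m.integrableOn_map_iff]
      simp_rw [Function.comp_def, abs_neg, neg_preimage, neg_Iic, neg_zero]
      exact Iff.mpr integrableOn_Ici_iff_integrableOn_Ioi hp
    have := hn.union hp
    rwa [Iic_union_Ioi, integrableOn_univ] at this
  have := h1.2
  rwa [hasFiniteIntegral_iff_ofReal (Filter.Eventually.of_forall fun w => Kk_nonneg _ _ _ _)] at this

lemma Gf_le (k : ℕ) (d : ℝ) (hd0 : 0 < d) (hd2 : d < 1/2) {lam : ℝ} (hl : 0 ≤ lam)
    (f : ℝ → ℝ≥0∞) (hf : Measurable f)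
    (h : ∫⁻ s, ∫⁻ r, f s * f r * ENNReal.ofReal (Kk k d lam (s - r)) < ∞) :
    Gf k d lam f < ∞ := by
  rw [Gf_eq k d hd0 hd2 hl f hf]
  set M := ENNReal.ofReal ((∫ y in Ioi (0:ℝ), y ^ (d - 1) * (1 + y) ^ (d - 1)) ^ k) with hM
  have hMt : M ≠ ∞ := ENNReal.ofReal_ne_top
  calc _ ≤ ∫⁻ s, ∫⁻ r, M * (f s * f r * ENNReal.ofReal (Kk k d lam (s - r))) := by
        refine lintegral_mono fun s => lintegral_mono fun r => ?_
        simp only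
        rw [cker_pow, ENNReal.ofReal_mul (Kk_nonneg _ _ _ _), mul_comm M, mul_assoc, mul_assoc,
          mul_assoc]
        gcongr
        exact ENNReal.ofReal_le_ofReal
          (pow_le_pow_left₀ (Jint_nonneg _ _ _) (Jint_bound d hd0 hd2 hl _) k)
    _ = M * ∫⁻ s, ∫⁻ r, (f s * f r * ENNReal.ofReal (Kk k d lam (s - r))) := by
        simp_rw [lintegral_const_mul' M _ hMt]
    _ < ∞ := ENNReal.mul_lt_top hMt.lt_top h

noncomputable def farf (t b s : ℝ) : ℝ≥0∞ :=
  (Iic (-t)).indicator (fun s => ENNReal.ofReal (|b| * t * (-s) ^ (b - 1))) s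

lemma farf_measurable (t b : ℝ) : Measurable (farf t b) := by
  unfold farf
  exact Measurable.indicator (by fun_prop) measurableSet_Iic

lemma farf_fin (t b : ℝ) (ht : 0 < t) (hb : b < 1/2) : ∫⁻ s, farf t b s ^ 2 < ∞ := by
  have e : ∀ s, farf t b (0 - s) ^ 2 = (Ici t).indicator
      (fun s => ENNReal.ofReal ((|b| * t) ^ 2 * s ^ (2 * b - 2))) s := by
    intro s
    unfold farf
    by_cases hs : s ∈ Ici t
    · have hs' : t ≤ s := hs
      have hs0 : 0 < s := by linarith
      rw [indicator_of_mem hs, indicator_of_mem (by simpa using hs'),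
        ← ENNReal.ofReal_pow (by rw [zero_sub, neg_neg]; positivity)]
      congr 1
      rw [zero_sub, neg_neg, mul_pow, ← Real.rpow_mul_natCast hs0.le]
      congr 2
      push_cast; ring
    · have hs' : ¬ t ≤ s := hs
      rw [indicator_of_notMem hs, indicator_of_notMem (by simpa using hs')]
      simp
  rw [← lintegral_sub_left_eq_self _ (0:ℝ)]
  simp_rw [e]
  rw [lintegral_indicator measurableSet_Ici]
  have h1 : IntegrableOn (fun s : ℝ => (|b| * t) ^ 2 * s ^ (2 * b - 2)) (Ici t) :=
    (Iff.mpr integrableOn_Ici_iff_integrableOn_Ioi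
      (integrableOn_Ioi_rpow_of_lt (by linarith) ht)).const_mul _
  have := h1.2
  rw [hasFiniteIntegral_iff_ofReal] at this
  · exact this
  · filter_upwards [ae_restrict_mem measurableSet_Ici] with w hw
    have hw' : t ≤ w := hw
    have : 0 < w := by linarith
    simp only [Pi.zero_apply]
    positivity

lemma rpow_diff_bound (t b p : ℝ) (ht : 0 < t) (hb : b < 1) (hp : 0 < p) :
    |(t + p) ^ b - p ^ b| ≤ |b| * t * p ^ (b - 1) := by
  have := Convex.norm_image_sub_le_of_norm_hasDerivWithin_le
    (f := fun x : ℝ => x ^ b) (f' := fun x => b * x ^ (b - 1)) (s := Icc p (t + p))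
    (C := |b| * p ^ (b - 1)) (x := p) (y := t + p) ?_ ?_ (convex_Icc _ _)
    ⟨le_rfl, by linarith⟩ ⟨by linarith, le_rfl⟩
  · rw [Real.norm_eq_abs, Real.norm_eq_abs, add_sub_cancel_right, abs_of_pos ht] at this
    linarith
  · intro x hx
    have := hx.1
    exact (Real.hasDerivAt_rpow_const (Or.inl (by linarith))).hasDerivWithinAt
  · intro x hx
    have hx1 := hx.1
    rw [norm_mul, Real.norm_eq_abs, Real.norm_of_nonneg (Real.rpow_nonneg (by linarith) _)]
    have := Real.rpow_le_rpow_of_nonpos hp hx1 (show b - 1 ≤ 0 by linarith)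
    gcongr

lemma ell_bound (t b s : ℝ) (ht : 0 < t) (hb : b ≠ 0) (hb1 : b < 1) :
    ENNReal.ofReal |b * ell t b s| ≤ (phi (3 * t) b (t - s) + phi (3 * t) b (0 - s)) + farf t b s := by
  have e : b * ell t b s = (max (t - s) 0) ^ b - (max (-s) 0) ^ b := by
    unfold ell; field_simp
  rw [e]
  rcases le_or_gt t s with h | h
  · rw [max_eq_right (by linarith), max_eq_right (by linarith), sub_self]
    simp
  rcases le_or_gt s (-t) with h2 | h2
  · refine le_trans ?_ le_add_self
    unfold farf
    rw [indicator_of_mem (show s ∈ Iic (-t) from h2), max_eq_left (by linarith),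
      max_eq_left (by linarith)]
    apply ENNReal.ofReal_le_ofReal
    have := rpow_diff_bound t b (-s) ht hb1 (by linarith)
    rwa [← sub_eq_add_neg] at this
  · refine le_trans ?_ le_self_add
    have h3 : t - s ∈ Ioo 0 (3 * t) := ⟨by linarith, by linarith⟩
    unfold phi
    rw [indicator_of_mem h3, max_eq_left (by linarith)]
    have h4 : 0 ≤ (t - s) ^ b := Real.rpow_nonneg (by linarith) _
    rcases le_or_gt 0 s with h5 | h5
    · rw [max_eq_right (by linarith), Real.zero_rpow hb, sub_zero, abs_of_nonneg h4]
      exact le_self_add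
    · have h6 : 0 - s ∈ Ioo 0 (3 * t) := ⟨by linarith, by linarith⟩
      have h7 : 0 ≤ (-s) ^ b := Real.rpow_nonneg (by linarith) _
      rw [indicator_of_mem h6, max_eq_left (by linarith), zero_sub,
        ← ENNReal.ofReal_add h4 h7]
      apply ENNReal.ofReal_le_ofReal
      rw [abs_le]; constructor <;> linarith

lemma ell_Gf {k : ℕ} (hk : 1 ≤ k) (d : ℝ) (hd0 : 0 < d) (hd2 : d < 1/2)
    (hc : -1 < (k:ℝ) * (2 * d - 1)) (b : ℝ) (hb : b ≠ 0) (hb0 : -1 < b) (hb1 : b < 1/2)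
    (hbc : -2 < 2 * b + (k:ℝ) * (2 * d - 1))
    (lam : ℝ) (hlam : 0 < lam) (t : ℝ) (ht : 0 < t) :
    Gf k d lam (fun s => ENNReal.ofReal |b * ell t b s|) < ∞ := by
  refine lt_of_le_of_lt (Gf_mono k d lam fun s => ell_bound t b s ht hb (by linarith)) ?_
  have hphi := phi_measurable (3 * t) b
  have hnear : ∀ a, Gf k d lam (fun s => phi (3 * t) b (a - s)) < ∞ := by
    intro a
    apply Gf_le k d hd0 hd2 hlam.le _ (by fun_prop)
    refine lt_of_le_of_lt ?_ (near_shift a (3 * t) b _ (by linarith) hb0 hc hbc)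
    refine lintegral_mono fun s => lintegral_mono fun r => ?_
    simp only
    gcongr
    unfold Kk
    apply mul_le_of_le_one_right (by positivity)
    rw [Real.exp_le_one_iff]
    have : 0 ≤ lam * k * |s - r| := by positivity
    linarith
  apply Gf_add k d lam (by fun_prop) (farf_measurable t b)
  · exact Gf_add k d lam (by fun_prop) (by fun_prop) (hnear t) (hnear 0)
  · apply Gf_le k d hd0 hd2 hlam.le _ (farf_measurable t b)
    refine far_fin (farf t b) (fun w => ENNReal.ofReal (Kk k d lam w)) (farf_measurable t b) ?_ ?_
      (farf_fin t b ht hb1) (Kk_fin k hk d lam hlam hc)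
    · unfold Kk; fun_prop
    · intro w; unfold Kk; rw [abs_neg]

lemma ell_scale (t b u : ℝ) (ht : 0 < t) : ell t b (t * u) = t ^ b * ell 1 b u := by
  unfold ell
  have e1 : max (t - t * u) 0 = t * max (1 - u) 0 := by
    rw [mul_max_of_nonneg _ _ ht.le]; ring_nf
  have e2 : max (-(t * u)) 0 = t * max (-u) 0 := by
    rw [mul_max_of_nonneg _ _ ht.le]; ring_nf
  rw [e1, e2, Real.mul_rpow ht.le (le_max_right _ _), Real.mul_rpow ht.le (le_max_right _ _)]
  ring

lemma Pk_measurable_comp {α : Type*} [MeasurableSpace α] (k : ℕ) (d lam : ℝ) {f : α → ℝ}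
    {g : α → Fin k → ℝ} (hf : Measurable f) (hg : Measurable g) :
    Measurable (fun a => Pk k d lam (f a) (g a)) := by
  unfold Pk
  refine Finset.measurable_prod _ fun i _ => ?_
  exact (gker_measurable d lam).comp (by fun_prop)

set_option maxHeartbeats 1000000 in
lemma full_integrable {k : ℕ} (hk : 1 ≤ k) (d : ℝ) (hd0 : 0 < d) (hd2 : d < 1/2)
    (hc : -1 < (k:ℝ) * (2 * d - 1)) (b : ℝ) (hb : b ≠ 0) (hb0 : -1 < b) (hb1 : b < 1/2)
    (hbc : -2 < 2 * b + (k:ℝ) * (2 * d - 1))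
    (lam : ℝ) (hlam : 0 < lam) (t : ℝ) (ht : 0 < t) :
    Integrable (fun q : (Fin k → ℝ) × (ℝ × ℝ) =>
      (ell t b q.2.1 * Pk k d lam q.2.1 q.1) * (ell t b q.2.2 * Pk k d lam q.2.2 q.1))
      (volume.prod (volume.prod volume)) := by
  have hell := ell_measurable t b
  have hP1 : Measurable fun q : (Fin k → ℝ) × (ℝ × ℝ) => Pk k d lam q.2.1 q.1 :=
    Pk_measurable_comp k d lam (by fun_prop) (by fun_prop)
  have hP2 : Measurable fun q : (Fin k → ℝ) × (ℝ × ℝ) => Pk k d lam q.2.2 q.1 :=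
    Pk_measurable_comp k d lam (by fun_prop) (by fun_prop)
  have hm : Measurable (fun q : (Fin k → ℝ) × (ℝ × ℝ) =>
      (b * ell t b q.2.1 * Pk k d lam q.2.1 q.1) * (b * ell t b q.2.2 * Pk k d lam q.2.2 q.1)) := by
    fun_prop
  have key : Integrable (fun q : (Fin k → ℝ) × (ℝ × ℝ) =>
      (b * ell t b q.2.1 * Pk k d lam q.2.1 q.1) * (b * ell t b q.2.2 * Pk k d lam q.2.2 q.1))
      (volume.prod (volume.prod volume)) := by
    refine ⟨hm.aestronglyMeasurable, ?_⟩
    unfold HasFiniteIntegral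
    rw [lintegral_prod _ hm.enorm.aemeasurable]
    refine lt_of_le_of_lt (le_of_eq ?_)
      (ell_Gf hk d hd0 hd2 hc b hb hb0 hb1 hbc lam hlam t ht)
    unfold Gf
    refine lintegral_congr fun x => ?_
    have hs : Measurable fun s => ENNReal.ofReal |b * ell t b s| * ENNReal.ofReal (Pk k d lam s x) :=
      Measurable.mul (by fun_prop)
        (Pk_measurable_comp k d lam measurable_id measurable_const).ennreal_ofReal
    rw [sq, ← lintegral_prod_mul hs.aemeasurable hs.aemeasurable]
    refine lintegral_congr fun p => ?_
    have : ∀ s, ‖b * ell t b s * Pk k d lam s x‖ₑ =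
        ENNReal.ofReal |b * ell t b s| * ENNReal.ofReal (Pk k d lam s x) := by
      intro s
      rw [enorm_mul, Real.enorm_eq_ofReal_abs, Real.enorm_of_nonneg (Pk_nonneg _ _ _ _ _)]
    rw [enorm_mul, this, this]
  have := key.const_mul (b⁻¹ * b⁻¹)
  refine this.congr (Filter.Eventually.of_forall fun q => ?_)
  simp only
  field_simp

theorem stmt17 {k : ℕ} (hk : 1 ≤ k) (d : ℝ)
    (hd₁ : 1/2 - 1/(2*(k : ℝ)) < d) (hd₂ : d < 1/2)
    (b : ℝ) (hb : b ≠ 0)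
    (hb₁ : -(k : ℝ) * (d - 1) - (k : ℝ) / 2 - 1 < b)
    (hb₂ : b < -(k : ℝ) * (d - 1) - (k : ℝ) / 2)
    (lam : ℝ) (hlam : 0 < lam) (t : ℝ) (ht : 0 < t) :
    (∫ x : Fin k → ℝ, (tHermiteFiltKernel k d lam b t x) ^ 2) =
      t ^ (2 * b + 2 + (k : ℝ) * (2 * d - 1)) * Phi k d b (lam * t) := by
  have hk1 : (1:ℝ) ≤ k := by exact_mod_cast hk
  have hk0 : (0:ℝ) < k := by linarith
  have hc : -1 < (k:ℝ) * (2 * d - 1) := by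
    have h1 : (k:ℝ) * (1/2 - 1/(2*(k:ℝ))) < k * d := by gcongr
    have h2 : (k:ℝ) * (1/2 - 1/(2*(k:ℝ))) = k/2 - 1/2 := by field_simp
    linarith
  have hc0 : (k:ℝ) * (2 * d - 1) < 0 := mul_neg_of_pos_of_neg hk0 (by linarith)
  have hd0 : 0 < d := by
    have : 1/(2*(k:ℝ)) ≤ 1/2 := by
      apply one_div_le_one_div_of_le <;> linarith
    linarith
  have hI := full_integrable hk d hd0 hd₂ hc b hb (by linarith) (by linarith) (by linarith)
    lam hlam t ht
  have e1 : ∀ x : Fin k → ℝ, (tHermiteFiltKernel k d lam b t x) ^ 2 =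
      ∫ p : ℝ × ℝ, (ell t b p.1 * Pk k d lam p.1 x) * (ell t b p.2 * Pk k d lam p.2 x)
        ∂(volume.prod volume) := by
    intro x
    rw [integral_prod_mul (fun s => ell t b s * Pk k d lam s x)
      (fun s => ell t b s * Pk k d lam s x), sq]
    rfl
  have hinner : ∀ s r : ℝ, r ≠ s → ∫ x : Fin k → ℝ,
      (ell t b s * Pk k d lam s x) * (ell t b r * Pk k d lam r x) =
      ell t b s * ell t b r * cker d lam (s - r) ^ k := by
    intro s r hr
    rw [← (Pk_conv k d hd0 hd₂ hlam.le hr).2, ← integral_const_mul]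
    congr 1; funext x; ring
  have e2 : (∫ x : Fin k → ℝ, (tHermiteFiltKernel k d lam b t x) ^ 2) =
      ∫ s, ∫ r, ell t b s * ell t b r * cker d lam (s - r) ^ k := by
    simp_rw [e1]
    rw [integral_integral_swap (f := fun (x : Fin k → ℝ) (p : ℝ × ℝ) =>
      (ell t b p.1 * Pk k d lam p.1 x) * (ell t b p.2 * Pk k d lam p.2 x)) hI]
    rw [integral_prod _ hI.integral_prod_right]
    congr 1; funext s
    refine integral_congr_ae ?_
    filter_upwards [(volume : Measure ℝ).ae_ne s] with r hr
    exact hinner s r hr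
  rw [e2]
  have hsc : ∀ F : ℝ → ℝ, ∫ s, F s = t * ∫ u, F (t * u) := by
    intro F
    rw [Measure.integral_comp_mul_left, abs_of_pos (inv_pos.mpr ht), smul_eq_mul,
      mul_inv_cancel_left₀ ht.ne']
  rw [hsc]
  have e3 : ∀ u, ∫ r, ell t b (t * u) * ell t b r * cker d lam (t * u - r) ^ k =
      t * ∫ v, ell t b (t * u) * ell t b (t * v) * cker d lam (t * u - t * v) ^ k :=
    fun u => hsc _
  simp_rw [e3]
  unfold Phi
  rw [integral_const_mul, ← mul_assoc, ← integral_const_mul, ← integral_const_mul]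
  congr 1; funext u
  rw [← integral_const_mul, ← integral_const_mul]
  congr 1; funext v
  rw [ell_scale t b u ht, ell_scale t b v ht, cker_pow]
  have ej : Jint d lam (t * u - t * v) = ∫ y in Set.Ioi (0 : ℝ),
        y ^ (d - 1) * (1 + y) ^ (d - 1) * Real.exp (-2 * (lam * t) * |u - v| * y) := by
    unfold Jint
    rw [← mul_sub, abs_mul, abs_of_pos ht]
    congr 1; funext y; ring_nf
  rw [← ej]
  have ek : Kk k d lam (t * u - t * v) = t ^ ((k:ℝ) * (2 * d - 1)) *
      (Real.exp (-(lam * t) * (k : ℝ) * |u - v|) * |u - v| ^ ((k : ℝ) * (2 * d - 1))) := by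
    unfold Kk
    rw [← mul_sub, abs_mul, abs_of_pos ht, Real.mul_rpow ht.le (abs_nonneg _)]
    ring_nf
  rw [ek]
  have et : t ^ (2 * b + 2 + (k : ℝ) * (2 * d - 1)) =
      t * t * (t ^ b * t ^ b) * t ^ ((k:ℝ) * (2 * d - 1)) := by
    rw [Real.rpow_add ht, Real.rpow_add ht, ← Real.rpow_add ht b b, Real.rpow_two]
    ring_nf
  rw [et]
  ring
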